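/- arXiv:2504.18302 — 3 statements merged into one kernel-verified Lean document; each statement's English description precedes it below -/
import Mathlib

section
/- Let 𝒯 be a nice tree decomposition of a graph G=(V,E). Then for every S ⊆ V, the tree decomposition 𝒯 is S-nice. -/
/-! Preliminary definitions: rooted tree decompositions, `S`-traces, `S`-nice and
slim tree decompositions, following Chapelle et al. -/

/-- A walk in `G` all of whose vertices lie in the set `W`. -/
def SimpleGraph.ReachableIn {V : Type} (G : SimpleGraph V) (W : Set V) (u v : V) : Prop :=
  ∃ p : G.Walk u v, ∀ x ∈ p.support, x ∈ W

/-- The open neighborhood of a set of vertices. -/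
def SimpleGraph.nbhdSet {V : Type} (G : SimpleGraph V) (W : Set V) : Set V :=
  {x | x ∉ W ∧ ∃ w ∈ W, G.Adj w x}

/-- The vertex set of the connected component of `G − X` that contains `v`
(assuming `v ∉ X`). -/
def SimpleGraph.compOutside {V : Type} (G : SimpleGraph V) (X : Set V) (v : V) : Set V :=
  {w | G.ReachableIn Xᶜ v w}

/-- A rooted tree decomposition of a graph `G` on vertex type `V`, with node type `ι`.
The rooted tree is given by a parent function: the root is a fixed point of `parent`
and every node reaches the root by iterating `parent`.  The bags satisfy the three
usual conditions of a tree decomposition; connectedness of `{t | v ∈ bag t}` is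
expressed by the existence of a highest node `m` containing `v` such that from any
node whose bag contains `v` the whole ancestor chain up to `m` contains `v`. -/
structure RootedTreeDecomp (V ι : Type) (G : SimpleGraph V) where
  root : ι
  parent : ι → ι
  parent_root : parent root = root
  reaches_root : ∀ t : ι, ∃ n : ℕ, parent^[n] t = root
  bag : ι → Set V
  bags_cover : ∀ v : V, ∃ t : ι, v ∈ bag t
  bags_of_edges : ∀ ⦃u v : V⦄, G.Adj u v → ∃ t : ι, u ∈ bag t ∧ v ∈ bag t
  bags_connected : ∀ v : V, ∃ m : ι, v ∈ bag m ∧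
    ∀ t : ι, v ∈ bag t → ∃ n : ℕ, parent^[n] t = m ∧ ∀ i ≤ n, v ∈ bag (parent^[i] t)

namespace RootedTreeDecomp

variable {V ι : Type} {G : SimpleGraph V}

/-- `t'` lies in the subtree `T_t` rooted at `t`; equivalently, `t` is an
ancestor (possibly equal) of `t'`. -/
def InSubtree (𝒯 : RootedTreeDecomp V ι G) (t t' : ι) : Prop :=
  ∃ n : ℕ, 𝒯.parent^[n] t' = t

/-- `t` is the parent of `t'`. -/
def IsParent (𝒯 : RootedTreeDecomp V ι G) (t t' : ι) : Prop :=
  t' ≠ 𝒯.root ∧ 𝒯.parent t' = t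

/-- `V_t`: the union of the bags of the nodes of the subtree rooted at `t`. -/
def Vt (𝒯 : RootedTreeDecomp V ι G) (t : ι) : Set V :=
  {v | ∃ t', 𝒯.InSubtree t t' ∧ v ∈ 𝒯.bag t'}

/-- `L_t = V_t ∖ X_t`. -/
def Lt (𝒯 : RootedTreeDecomp V ι G) (t : ι) : Set V := 𝒯.Vt t \ 𝒯.bag t

/-- `R_t = V ∖ V_t`. -/
def Rt (𝒯 : RootedTreeDecomp V ι G) (t : ι) : Set V := (𝒯.Vt t)ᶜ

/-- `L_t^S = L_t ∩ S`. -/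
def LS (𝒯 : RootedTreeDecomp V ι G) (S : Set V) (t : ι) : Set V := 𝒯.Lt t ∩ S

/-- `X_t^S = X_t ∩ S`. -/
def XS (𝒯 : RootedTreeDecomp V ι G) (S : Set V) (t : ι) : Set V := 𝒯.bag t ∩ S

/-- `R_t^S = R_t ∩ S`. -/
def RS (𝒯 : RootedTreeDecomp V ι G) (S : Set V) (t : ι) : Set V := 𝒯.Rt t ∩ S

/-- The `S`-trace of a node `t`. -/
def STrace (𝒯 : RootedTreeDecomp V ι G) (S : Set V) (t : ι) : Set V × Set V × Set V :=
  (𝒯.LS S t, 𝒯.XS S t, 𝒯.RS S t)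

/-- Every bag has size at most `k + 1`, i.e. the width is at most `k`. -/
def WidthAtMost (𝒯 : RootedTreeDecomp V ι G) (k : ℕ) : Prop :=
  ∀ t : ι, (𝒯.bag t).ncard ≤ k + 1

/-- The width of the decomposition (max bag size minus one) is exactly `k`. -/
def HasWidth (𝒯 : RootedTreeDecomp V ι G) (k : ℕ) : Prop :=
  𝒯.WidthAtMost k ∧ ∃ t : ι, (𝒯.bag t).ncard = k + 1

/-- `t'` is an `S`-child of `t`. -/
def IsSChild (𝒯 : RootedTreeDecomp V ι G) (S : Set V) (t t' : ι) : Prop :=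
  𝒯.IsParent t t' ∧ ((𝒯.LS S t' ∪ 𝒯.XS S t') \ (𝒯.RS S t ∪ 𝒯.XS S t)).Nonempty

/-- `t` is an `S`-bottom node: `L_t^S ≠ ∅` and `t` is the bottom node of the
directed path of its own `S`-trace (every node with the same `S`-trace is an
ancestor of `t`). -/
def IsSBottom (𝒯 : RootedTreeDecomp V ι G) (S : Set V) (t : ι) : Prop :=
  (𝒯.LS S t).Nonempty ∧ ∀ t', 𝒯.STrace S t' = 𝒯.STrace S t → 𝒯.InSubtree t' t

/-- `t` admits the `S`-operation `introduce(v)`. -/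
def AdmitsIntroduce (𝒯 : RootedTreeDecomp V ι G) (S : Set V) (t : ι) (v : V) : Prop :=
  ∃ t₁, 𝒯.IsSChild S t t₁ ∧ (∀ t₂, 𝒯.IsSChild S t t₂ → t₂ = t₁) ∧
    v ∈ S ∧ v ∉ 𝒯.bag t₁ ∧ 𝒯.XS S t = 𝒯.XS S t₁ ∪ {v}

/-- `t` admits the `S`-operation `forget(v)`. -/
def AdmitsForget (𝒯 : RootedTreeDecomp V ι G) (S : Set V) (t : ι) (v : V) : Prop :=
  ∃ t₁, 𝒯.IsSChild S t t₁ ∧ (∀ t₂, 𝒯.IsSChild S t t₂ → t₂ = t₁) ∧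
    v ∈ S ∧ v ∈ 𝒯.bag t₁ ∧ 𝒯.XS S t = 𝒯.XS S t₁ \ {v}

/-- `t` admits the `S`-operation `join` with the two `S`-children `t₁, t₂`. -/
def AdmitsJoin (𝒯 : RootedTreeDecomp V ι G) (S : Set V) (t t₁ t₂ : ι) : Prop :=
  t₁ ≠ t₂ ∧ 𝒯.IsSChild S t t₁ ∧ 𝒯.IsSChild S t t₂ ∧
    (∀ t₃, 𝒯.IsSChild S t t₃ → t₃ = t₁ ∨ t₃ = t₂) ∧
    𝒯.XS S t₁ ∪ 𝒯.XS S t₂ ⊆ 𝒯.XS S t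

/-- `S`-nice tree decomposition: bags along tree edges are comparable and differ in
size by at most one, and every `S`-bottom node admits one of the `S`-operations. -/
def IsSNice (𝒯 : RootedTreeDecomp V ι G) (S : Set V) : Prop :=
  (∀ t t' : ι, 𝒯.IsParent t' t →
      (𝒯.bag t ⊆ 𝒯.bag t' ∨ 𝒯.bag t' ⊆ 𝒯.bag t) ∧
      (𝒯.bag t).ncard ≤ (𝒯.bag t').ncard + 1 ∧ (𝒯.bag t').ncard ≤ (𝒯.bag t).ncard + 1) ∧
  ∀ t : ι, 𝒯.IsSBottom S t →
    (∃ v, 𝒯.AdmitsIntroduce S t v) ∨ (∃ v, 𝒯.AdmitsForget S t v) ∨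
      (∃ t₁ t₂, 𝒯.AdmitsJoin S t t₁ t₂)

/-- Nice tree decomposition: root and leaves have empty bags, and every internal
node is an introduce, forget, or join node. -/
def IsNice (𝒯 : RootedTreeDecomp V ι G) : Prop :=
  𝒯.bag 𝒯.root = ∅ ∧
  (∀ t : ι, (∀ t', ¬𝒯.IsParent t t') → 𝒯.bag t = ∅) ∧
  ∀ t : ι, (∃ t', 𝒯.IsParent t t') →
    (∃ t', 𝒯.IsParent t t' ∧ (∀ t'', 𝒯.IsParent t t'' → t'' = t') ∧
      ((∃ v, v ∉ 𝒯.bag t' ∧ 𝒯.bag t = 𝒯.bag t' ∪ {v}) ∨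
        (∃ v, v ∈ 𝒯.bag t' ∧ 𝒯.bag t = 𝒯.bag t' \ {v}))) ∨
    (∃ t₁ t₂, t₁ ≠ t₂ ∧ 𝒯.IsParent t t₁ ∧ 𝒯.IsParent t t₂ ∧
      (∀ t₃, 𝒯.IsParent t t₃ → t₃ = t₁ ∨ t₃ = t₂) ∧
      𝒯.bag t = 𝒯.bag t₁ ∧ 𝒯.bag t = 𝒯.bag t₂)

/-- A set of nodes inducing a connected subtree of the tree: it contains a node `m`
such that from every node of the set the whole ancestor chain up to `m` stays in
the set. -/
def ConnectedNodeSet (𝒯 : RootedTreeDecomp V ι G) (A : Set ι) : Prop :=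
  ∃ m ∈ A, ∀ t ∈ A, ∃ n : ℕ, 𝒯.parent^[n] t = m ∧ ∀ i ≤ n, 𝒯.parent^[i] t ∈ A

/-- A full join tree: a non-trivial inclusion-maximal connected set of nodes all of
which share one and the same full bag `X` (of size `k + 1`). -/
def IsFullJoinTree (𝒯 : RootedTreeDecomp V ι G) (k : ℕ) (A : Set ι) (X : Set V) : Prop :=
  A.Nontrivial ∧ 𝒯.ConnectedNodeSet A ∧ X.ncard = k + 1 ∧ (∀ t ∈ A, 𝒯.bag t = X) ∧
  ∀ A' : Set ι, A ⊆ A' → 𝒯.ConnectedNodeSet A' → (∀ t ∈ A', 𝒯.bag t = X) → A' = A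

/-- `m` is the root (top node) of the node set `A`. -/
def IsTopOf (𝒯 : RootedTreeDecomp V ι G) (A : Set ι) (m : ι) : Prop :=
  m ∈ A ∧ ∀ t ∈ A, 𝒯.InSubtree m t

/-- The condition on a pair `(u, ti)` appearing in condition (7) of slimness:
either `ti` belongs to `T'_C` (it is an `S`-child of a node of the full join tree
`A` but is not itself in `A`) and `u ∈ V_{ti}`, or `ti` is the parent of the root
`tr` of the full join tree and `u ∈ V ∖ V_{tr}`. -/
def FullJoinBranch (𝒯 : RootedTreeDecomp V ι G) (S : Set V) (A : Set ι) (tr : ι)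
    (u : V) (ti : ι) : Prop :=
  (ti ∉ A ∧ (∃ ta ∈ A, 𝒯.IsSChild S ta ti) ∧ u ∈ 𝒯.Vt ti) ∨
  (tr ≠ 𝒯.root ∧ ti = 𝒯.parent tr ∧ u ∉ 𝒯.Vt tr)

/-- Slim `S`-nice tree decomposition of width `k` (the seven conditions of the
paper; a bag is *full* if it has size `k + 1`). -/
def IsSlim (𝒯 : RootedTreeDecomp V ι G) (S : Set V) (k : ℕ) : Prop :=
  -- (1) the root is not an S-bottom node
  (¬𝒯.IsSBottom S 𝒯.root) ∧
  -- (2) S-bottom nodes with two S-children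
  (∀ t t₁ t₂ : ι, 𝒯.IsSBottom S t → t₁ ≠ t₂ → 𝒯.IsSChild S t t₁ → 𝒯.IsSChild S t t₂ →
    (∃ A X, 𝒯.IsFullJoinTree k A X ∧ t ∈ A) ∨
      ((𝒯.bag t₁).ncard ≠ k + 1 ∧ (𝒯.bag t₂).ncard ≠ k + 1 ∧
        (𝒯.bag t₁).ncard ≤ (𝒯.bag t).ncard ∧ (𝒯.bag t₂).ncard ≤ (𝒯.bag t).ncard ∧
        ∀ tp, 𝒯.IsParent tp t →
          (𝒯.bag tp).ncard ≠ k + 1 ∧ (𝒯.bag tp).ncard ≤ (𝒯.bag t).ncard)) ∧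
  -- (3) S-bottom nodes with a non-full bag
  (∀ t tp : ι, 𝒯.IsSBottom S t → (𝒯.bag t).ncard ≠ k + 1 → 𝒯.IsParent tp t →
    𝒯.bag t = 𝒯.bag tp ∧ ∀ t'', 𝒯.IsSChild S tp t'' → t'' = t) ∧
  -- (4) S-bottom nodes admitting forget(v)
  (∀ t v t', 𝒯.IsSBottom S t → 𝒯.AdmitsForget S t v → 𝒯.IsSChild S t t' →
    (𝒯.bag t').ncard ≠ k + 1 →
    (∀ t₁ t₂, 𝒯.IsSChild S t' t₁ → 𝒯.IsSChild S t' t₂ → t₁ = t₂) ∧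
      ∀ t'', 𝒯.IsSChild S t' t'' → 𝒯.bag t' = 𝒯.bag t'') ∧
  -- (5) parents of S-bottom nodes with non-full bags
  (∀ t tp, 𝒯.IsSBottom S t → 𝒯.IsParent tp t → (𝒯.bag tp).ncard ≠ k + 1 →
    tp = 𝒯.root ∨ ∀ tpp, 𝒯.IsParent tpp tp → ¬𝒯.IsSBottom S tpp) ∧
  -- (6) nodes of full join trees
  (∀ A X, 𝒯.IsFullJoinTree k A X → ∀ t ∈ A,
    𝒯.IsSBottom S t ∧ ∃ t₁ t₂, t₁ ≠ t₂ ∧ 𝒯.IsSChild S t t₁ ∧ 𝒯.IsSChild S t t₂) ∧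
  -- (7) branching condition of full join trees
  (∀ A X tr, 𝒯.IsFullJoinTree k A X → 𝒯.IsTopOf A tr →
    ∀ v ∈ X \ S, ∃ u₁ u₂ u₃ : V, ∃ t₁ t₂ t₃ : ι,
      u₁ ≠ u₂ ∧ u₁ ≠ u₃ ∧ u₂ ≠ u₃ ∧ t₁ ≠ t₂ ∧ t₁ ≠ t₃ ∧ t₂ ≠ t₃ ∧
      (G.Adj v u₁ ∧ u₁ ∉ X ∧ (∃ s ∈ S, G.ReachableIn Xᶜ u₁ s) ∧
        𝒯.FullJoinBranch S A tr u₁ t₁) ∧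
      (G.Adj v u₂ ∧ u₂ ∉ X ∧ (∃ s ∈ S, G.ReachableIn Xᶜ u₂ s) ∧
        𝒯.FullJoinBranch S A tr u₂ t₂) ∧
      (G.Adj v u₃ ∧ u₃ ∉ X ∧ (∃ s ∈ S, G.ReachableIn Xᶜ u₃ s) ∧
        𝒯.FullJoinBranch S A tr u₃ t₃))

end RootedTreeDecomp

/-- `tw(G) ≤ k`: `G` admits a (rooted) tree decomposition of width at most `k`. -/
def SimpleGraph.TreewidthAtMost {V : Type} (G : SimpleGraph V) (k : ℕ) : Prop :=
  ∃ (ι : Type) (𝒯 : RootedTreeDecomp V ι G), 𝒯.WidthAtMost k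

namespace RootedTreeDecomp

section helpers

theorem iter_root {V ι : Type} {G : SimpleGraph V} (T : RootedTreeDecomp V ι G) (n : ℕ) :
    T.parent^[n] T.root = T.root :=
  Function.iterate_fixed T.parent_root n

theorem eq_root_of_cycle {V ι : Type} {G : SimpleGraph V} (T : RootedTreeDecomp V ι G)
    {t : ι} {n : ℕ} (h : T.parent^[n + 1] t = t) : t = T.root := by
  obtain ⟨k, hk⟩ := T.reaches_root t
  have h1 : T.parent^[(n + 1) * k] t = t := by
    rw [Function.iterate_mul]
    exact Function.iterate_fixed h k
  have h2 : (n + 1) * k = n * k + k := by ring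
  rw [h2, Function.iterate_add_apply, hk, iter_root] at h1
  exact h1.symm

theorem not_inSubtree_of_isParent {V ι : Type} {G : SimpleGraph V}
    (T : RootedTreeDecomp V ι G) {t t' : ι} (h : T.IsParent t t') : ¬ T.InSubtree t' t := by
  rintro ⟨n, hn⟩
  apply h.1
  apply T.eq_root_of_cycle (n := n)
  rw [Function.iterate_succ_apply, h.2, hn]

theorem mem_Vt_iff {V ι : Type} {G : SimpleGraph V} (T : RootedTreeDecomp V ι G)
    (t : ι) (v : V) : v ∈ T.Vt t ↔ v ∈ T.bag t ∨ ∃ t', T.IsParent t t' ∧ v ∈ T.Vt t' := by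
  constructor
  · rintro ⟨s, ⟨n, hn⟩, hv⟩
    induction n generalizing t with
    | zero => left; simp at hn; exact hn ▸ hv
    | succ n ih =>
      rw [Function.iterate_succ_apply'] at hn
      by_cases hr : T.parent^[n] s = T.root
      · rw [hr, T.parent_root] at hn
        exact ih t (hr.trans hn)
      · exact Or.inr ⟨_, ⟨hr, hn⟩, s, ⟨n, rfl⟩, hv⟩
  · rintro (h | ⟨t', h, s, ⟨n, hn⟩, hv⟩)
    · exact ⟨t, ⟨0, rfl⟩, h⟩
    · exact ⟨s, ⟨n + 1, by rw [Function.iterate_succ_apply', hn, h.2]⟩, hv⟩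

theorem bag_subset_Vt {V ι : Type} {G : SimpleGraph V} (T : RootedTreeDecomp V ι G)
    {t : ι} {v : V} (h : v ∈ T.bag t) : v ∈ T.Vt t := (T.mem_Vt_iff t v).2 (Or.inl h)

theorem isSChild_iff {V ι : Type} {G : SimpleGraph V} (T : RootedTreeDecomp V ι G)
    (S : Set V) {t t' : ι} : T.IsSChild S t t' ↔
      T.IsParent t t' ∧ ∃ v ∈ T.Vt t', v ∈ S ∧ v ∉ T.bag t := by
  unfold IsSChild
  refine and_congr_right fun h => ⟨?_, ?_⟩
  · rintro ⟨v, hv, hn⟩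
    simp only [Set.mem_union, not_or] at hn
    rcases hv with hv | hv
    · exact ⟨v, hv.1.1, hv.2, fun hb => hn.2 ⟨hb, hv.2⟩⟩
    · exact ⟨v, T.bag_subset_Vt hv.1, hv.2, fun hb => hn.2 ⟨hb, hv.2⟩⟩
  · rintro ⟨v, hv, hS, hb⟩
    refine ⟨v, ?_, ?_⟩
    · by_cases hx : v ∈ T.bag t'
      · exact Or.inr ⟨hx, hS⟩
      · exact Or.inl ⟨⟨hv, hx⟩, hS⟩
    · rintro (h1 | h1)
      · exact h1.1 ((T.mem_Vt_iff t v).2 (Or.inr ⟨t', h, hv⟩))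
      · exact hb h1.1

theorem strace_eq {V ι : Type} {G : SimpleGraph V} (T : RootedTreeDecomp V ι G)
    (S : Set V) {t t' : ι} (h1 : ∀ v ∈ S, v ∈ T.Vt t' ↔ v ∈ T.Vt t)
    (h2 : ∀ v ∈ S, v ∈ T.bag t' ↔ v ∈ T.bag t) : T.STrace S t' = T.STrace S t := by
  unfold STrace LS XS RS Lt Rt
  refine Prod.ext ?_ (Prod.ext ?_ ?_) <;> ext v <;> simp <;> intro hv <;>
    simp [h1 v hv, h2 v hv]

theorem not_bottom {V ι : Type} {G : SimpleGraph V} (T : RootedTreeDecomp V ι G)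
    (S : Set V) {t t' : ι} (hp : T.IsParent t t') (hb : T.IsSBottom S t)
    (h1 : ∀ v ∈ S, v ∈ T.Vt t' ↔ v ∈ T.Vt t)
    (h2 : ∀ v ∈ S, v ∈ T.bag t' ↔ v ∈ T.bag t) : False :=
  T.not_inSubtree_of_isParent hp (hb.2 t' (T.strace_eq S h1 h2))

end helpers

end RootedTreeDecomp

/-- Every nice tree decomposition is `S`-nice, for every `S ⊆ V`. -/
theorem statement4 {V ι : Type} [Fintype V] [DecidableEq V] {G : SimpleGraph V}
    (𝒯 : RootedTreeDecomp V ι G) (hnice : 𝒯.IsNice) (S : Set V) :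
    𝒯.IsSNice S := by
  obtain ⟨-, -, hint⟩ := hnice
  refine ⟨?_, ?_⟩
  · intro t t' hp
    rcases hint t' ⟨t, hp⟩ with ⟨c, hc, huniq, h⟩ | ⟨t₁, t₂, -, -, -, huniq, h1, h2⟩
    · obtain rfl := huniq t hp
      rcases h with ⟨v, hv, h⟩ | ⟨v, hv, h⟩
      · have hn := Set.ncard_insert_of_notMem hv (Set.toFinite _)
        rw [Set.union_singleton] at h
        rw [h]
        exact ⟨Or.inl (Set.subset_insert _ _), by omega, by omega⟩
      · have hn := Set.ncard_diff_singleton_add_one hv (Set.toFinite _)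
        rw [h]
        exact ⟨Or.inr Set.diff_subset, by omega, by omega⟩
    · have h : 𝒯.bag t = 𝒯.bag t' := by
        rcases huniq t hp with rfl | rfl
        · exact h1.symm
        · exact h2.symm
      rw [h]
      exact ⟨Or.inl subset_rfl, by omega, by omega⟩
  · intro t hb
    obtain ⟨x, ⟨hxV, hxb⟩, hxS⟩ := hb.1
    obtain ⟨c₀, hc₀, hxc⟩ := ((𝒯.mem_Vt_iff t x).1 hxV).resolve_left hxb
    have hS0 : 𝒯.IsSChild S t c₀ := (𝒯.isSChild_iff S).2 ⟨hc₀, x, hxc, hxS, hxb⟩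
    rcases hint t ⟨c₀, hc₀⟩ with ⟨c, hc, huniq, h⟩ | ⟨t₁, t₂, hne, hp1, hp2, huniq, h1, h2⟩
    · obtain rfl := huniq c₀ hc₀
      have hu : ∀ t₂, 𝒯.IsSChild S t t₂ → t₂ = c₀ := fun t₂ h => huniq t₂ h.1
      have hVt : ∀ w, w ∈ 𝒯.Vt t ↔ w ∈ 𝒯.bag t ∨ w ∈ 𝒯.Vt c₀ := by
        intro w
        rw [𝒯.mem_Vt_iff t w]
        refine or_congr_right ⟨?_, fun h => ⟨c₀, hc₀, h⟩⟩
        rintro ⟨d, hd, hw⟩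
        exact huniq d hd ▸ hw
      rcases h with ⟨v, hv, h⟩ | ⟨v, hv, h⟩
      · by_cases hvS : v ∈ S
        · refine Or.inl ⟨v, c₀, hS0, hu, hvS, hv, ?_⟩
          unfold RootedTreeDecomp.XS
          rw [h]
          ext w
          simp only [Set.mem_inter_iff, Set.mem_union, Set.mem_singleton_iff]
          constructor
          · tauto
          · rintro (h | rfl) <;> tauto
        · exfalso
          have hbag : ∀ w ∈ S, w ∈ 𝒯.bag c₀ ↔ w ∈ 𝒯.bag t := by
            intro w hw
            have : w ≠ v := by rintro rfl; exact hvS hw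
            simp [h, this]
          refine 𝒯.not_bottom S hc₀ hb ?_ hbag
          intro w hw
          rw [hVt, ← hbag w hw]
          exact ⟨Or.inr, fun h => h.elim 𝒯.bag_subset_Vt id⟩
      · by_cases hvS : v ∈ S
        · refine Or.inr (Or.inl ⟨v, c₀, hS0, hu, hvS, hv, ?_⟩)
          unfold RootedTreeDecomp.XS
          rw [h]
          ext w
          simp only [Set.mem_inter_iff, Set.mem_diff, Set.mem_singleton_iff]
          tauto
        · exfalso
          have hbag : ∀ w ∈ S, w ∈ 𝒯.bag c₀ ↔ w ∈ 𝒯.bag t := by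
            intro w hw
            have : w ≠ v := by rintro rfl; exact hvS hw
            simp [h, this]
          refine 𝒯.not_bottom S hc₀ hb ?_ hbag
          intro w hw
          rw [hVt, ← hbag w hw]
          exact ⟨Or.inr, fun h => h.elim 𝒯.bag_subset_Vt id⟩
    · have key : ∀ a b, 𝒯.IsParent t a → 𝒯.IsParent t b →
          (∀ t₃, 𝒯.IsParent t t₃ → t₃ = a ∨ t₃ = b) → 𝒯.bag t = 𝒯.bag a →
          𝒯.IsSChild S t b := by
        intro a b ha hb' hu hbag
        by_contra hnot
        refine 𝒯.not_bottom S ha hb ?_ (fun w _ => by rw [hbag])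
        intro w hw
        refine ⟨fun h => (𝒯.mem_Vt_iff t w).2 (Or.inr ⟨a, ha, h⟩), fun h => ?_⟩
        rcases (𝒯.mem_Vt_iff t w).1 h with h | ⟨d, hd, h⟩
        · exact 𝒯.bag_subset_Vt (hbag ▸ h)
        · rcases hu d hd with rfl | rfl
          · exact h
          · by_cases hwt : w ∈ 𝒯.bag t
            · exact 𝒯.bag_subset_Vt (hbag ▸ hwt)
            · exact (hnot ((𝒯.isSChild_iff S).2 ⟨hd, w, h, hw, hwt⟩)).elim
      refine Or.inr (Or.inr ⟨t₁, t₂, hne, key t₂ t₁ hp2 hp1 (fun d hd => (huniq d hd).symm) h2,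
        key t₁ t₂ hp1 hp2 huniq h1, fun d hd => huniq d hd.1, ?_⟩)
      unfold RootedTreeDecomp.XS
      rw [← h1, ← h2, Set.union_self]
end

section
/- Let 𝒯 be an S-nice tree decomposition of a graph G=(V,E) for some S ⊆ V. Let t be an S-bottom node of 𝒯 that admits the S-operation join, with the two S-children t_1 and t_2. Then L_{t_1}^S ∪ L_{t_2}^S = L_t^S, L_{t_1}^S ∩ L_{t_2}^S = ∅, L_{t_1}^S ≠ ∅, L_{t_2}^S ≠ ∅, R_{t_1}^S = R_t^S ∪ (X_t^S ∖ X_{t_1}^S) ∪ L_{t_2}^S, and R_{t_2}^S = R_t^S ∪ (X_t^S ∖ X_{t_2}^S) ∪ L_{t_1}^S. -/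
namespace RootedTreeDecomp

variable {V ι : Type} {G : SimpleGraph V}

theorem aux_acyclic (𝒯 : RootedTreeDecomp V ι G) {t c : ι} (h : 𝒯.IsParent t c) :
    ¬ 𝒯.InSubtree c t := by
  rintro ⟨n, hn⟩
  obtain ⟨hr, hp⟩ := h
  apply hr
  have hper : 𝒯.parent^[n+1] c = c := by
    rw [Function.iterate_succ_apply, hp, hn]
  obtain ⟨k, hk⟩ := 𝒯.reaches_root c
  have h1 : (𝒯.parent^[n+1])^[k] c = c := Function.iterate_fixed hper k
  rw [← Function.iterate_mul] at h1
  have h2 : (n + 1) * k = n * k + k := by ring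
  rw [h2, Function.iterate_add_apply, hk, Function.iterate_fixed 𝒯.parent_root] at h1
  exact h1.symm

theorem aux_trans (𝒯 : RootedTreeDecomp V ι G) {a b c : ι} (h : 𝒯.InSubtree a b)
    (h' : 𝒯.InSubtree b c) : 𝒯.InSubtree a c := by
  obtain ⟨n, rfl⟩ := h
  obtain ⟨m, rfl⟩ := h'
  exact ⟨n + m, by rw [Function.iterate_add_apply]⟩

theorem aux_sep (𝒯 : RootedTreeDecomp V ι G) {c u : ι} {v : V} (hv : v ∈ 𝒯.Vt c)
    (hu : v ∈ 𝒯.bag u) (hcu : ¬ 𝒯.InSubtree c u) : v ∈ 𝒯.bag c := by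
  obtain ⟨d, ⟨k, hk⟩, hd⟩ := hv
  obtain ⟨m, -, hm⟩ := 𝒯.bags_connected v
  obtain ⟨n, hn, hb⟩ := hm d hd
  obtain ⟨n', hn', -⟩ := hm u hu
  rcases le_total k n with h | h
  · rw [← hk]; exact hb k h
  · exfalso
    apply hcu
    refine 𝒯.aux_trans (b := m) ⟨k - n, ?_⟩ ⟨n', hn'⟩
    rw [← hn, ← Function.iterate_add_apply, Nat.sub_add_cancel h, hk]

theorem aux_bag_sub (𝒯 : RootedTreeDecomp V ι G) {t : ι} {v : V} (h : v ∈ 𝒯.bag t) :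
    v ∈ 𝒯.Vt t := ⟨t, ⟨0, rfl⟩, h⟩

theorem aux_Vt_mono (𝒯 : RootedTreeDecomp V ι G) {t c : ι} (h : 𝒯.IsParent t c) {v : V}
    (hv : v ∈ 𝒯.Vt c) : v ∈ 𝒯.Vt t := by
  obtain ⟨d, hd, hv⟩ := hv
  exact ⟨d, 𝒯.aux_trans ⟨1, h.2⟩ hd, hv⟩

theorem aux_sibling (𝒯 : RootedTreeDecomp V ι G) {t a b d : ι} (ha : 𝒯.IsParent t a)
    (hb : 𝒯.IsParent t b) (hab : a ≠ b) (h1 : 𝒯.InSubtree a d) (h2 : 𝒯.InSubtree b d) :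
    False := by
  obtain ⟨m, hm⟩ := h1
  obtain ⟨n, hn⟩ := h2
  wlog h : m ≤ n generalizing a b m n
  · exact this hb ha hab.symm n hn m hm (by omega)
  obtain ⟨k, rfl⟩ := Nat.exists_eq_add_of_le' h
  rw [Function.iterate_add_apply, hm] at hn
  cases k with
  | zero => exact hab hn
  | succ k =>
    rw [Function.iterate_succ_apply, ha.2] at hn
    exact 𝒯.aux_acyclic hb ⟨k, hn⟩

theorem aux_sib_sep (𝒯 : RootedTreeDecomp V ι G) {t a b : ι} (ha : 𝒯.IsParent t a)
    (hb : 𝒯.IsParent t b) (hab : a ≠ b) {v : V} (h1 : v ∈ 𝒯.Vt a) (h2 : v ∈ 𝒯.Vt b) :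
    v ∈ 𝒯.bag a := by
  obtain ⟨d, hd, hv⟩ := h2
  exact 𝒯.aux_sep h1 hv fun h => 𝒯.aux_sibling ha hb hab h hd

theorem aux_child (𝒯 : RootedTreeDecomp V ι G) {t d : ι} (n : ℕ) (h : 𝒯.parent^[n] d = t) :
    d = t ∨ ∃ c, 𝒯.IsParent t c ∧ 𝒯.InSubtree c d := by
  induction n with
  | zero => exact Or.inl h
  | succ n ih =>
    rw [Function.iterate_succ_apply'] at h
    by_cases hr : 𝒯.parent^[n] d = 𝒯.root
    · apply ih
      rw [hr, 𝒯.parent_root] at h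
      rw [hr, h]
    · exact Or.inr ⟨_, ⟨hr, h⟩, n, rfl⟩

theorem aux_Vt_cases (𝒯 : RootedTreeDecomp V ι G) {t : ι} {v : V} (h : v ∈ 𝒯.Vt t) :
    v ∈ 𝒯.bag t ∨ ∃ c, 𝒯.IsParent t c ∧ v ∈ 𝒯.Vt c := by
  obtain ⟨d, ⟨n, hn⟩, hv⟩ := h
  rcases 𝒯.aux_child n hn with rfl | ⟨c, hc, hd⟩
  · exact Or.inl hv
  · exact Or.inr ⟨c, hc, d, hd, hv⟩

end RootedTreeDecomp

/-- In an `S`-nice tree decomposition, if an `S`-bottom node `t`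
admits `join` with the two `S`-children `t₁, t₂`, then
`L_{t₁}^S ∪ L_{t₂}^S = L_t^S`, `L_{t₁}^S ∩ L_{t₂}^S = ∅`, both `L_{t₁}^S` and
`L_{t₂}^S` are nonempty, `R_{t₁}^S = R_t^S ∪ (X_t^S ∖ X_{t₁}^S) ∪ L_{t₂}^S`, and
`R_{t₂}^S = R_t^S ∪ (X_t^S ∖ X_{t₂}^S) ∪ L_{t₁}^S`. -/
theorem statement7 {V ι : Type} [Fintype V] [DecidableEq V] {G : SimpleGraph V}
    (𝒯 : RootedTreeDecomp V ι G) (S : Set V)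
    (hnice : 𝒯.IsSNice S) (t t₁ t₂ : ι)
    (hbot : 𝒯.IsSBottom S t)
    (hop : 𝒯.AdmitsJoin S t t₁ t₂) :
    𝒯.LS S t₁ ∪ 𝒯.LS S t₂ = 𝒯.LS S t ∧
    𝒯.LS S t₁ ∩ 𝒯.LS S t₂ = ∅ ∧
    (𝒯.LS S t₁).Nonempty ∧ (𝒯.LS S t₂).Nonempty ∧
    𝒯.RS S t₁ = 𝒯.RS S t ∪ (𝒯.XS S t \ 𝒯.XS S t₁) ∪ 𝒯.LS S t₂ ∧
    𝒯.RS S t₂ = 𝒯.RS S t ∪ (𝒯.XS S t \ 𝒯.XS S t₂) ∪ 𝒯.LS S t₁ := by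
  obtain ⟨hne, ⟨hp1, hs1⟩, ⟨hp2, hs2⟩, hall, hX⟩ := hop
  have m1 := fun v => 𝒯.aux_Vt_mono hp1 (v := v)
  have m2 := fun v => 𝒯.aux_Vt_mono hp2 (v := v)
  have b1 : ∀ v, v ∈ 𝒯.Vt t₁ → v ∈ 𝒯.bag t → v ∈ 𝒯.bag t₁ :=
    fun v h h' => 𝒯.aux_sep h h' (𝒯.aux_acyclic hp1)
  have b2 : ∀ v, v ∈ 𝒯.Vt t₂ → v ∈ 𝒯.bag t → v ∈ 𝒯.bag t₂ :=
    fun v h h' => 𝒯.aux_sep h h' (𝒯.aux_acyclic hp2)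
  have s1 := fun v => 𝒯.aux_sib_sep hp1 hp2 hne (v := v)
  have s2 := fun v => 𝒯.aux_sib_sep hp2 hp1 hne.symm (v := v)
  have c0 := fun v => 𝒯.aux_bag_sub (t := t) (v := v)
  have c1 := fun v => 𝒯.aux_bag_sub (t := t₁) (v := v)
  have c2 := fun v => 𝒯.aux_bag_sub (t := t₂) (v := v)
  have x1 : ∀ v, v ∈ S → v ∈ 𝒯.bag t₁ → v ∈ 𝒯.bag t := fun v h h' => (hX (Or.inl ⟨h', h⟩)).1
  have x2 : ∀ v, v ∈ S → v ∈ 𝒯.bag t₂ → v ∈ 𝒯.bag t := fun v h h' => (hX (Or.inr ⟨h', h⟩)).1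
  have key : ∀ v, v ∈ S → v ∈ 𝒯.Vt t → v ∉ 𝒯.bag t → v ∈ 𝒯.Vt t₁ ∨ v ∈ 𝒯.Vt t₂ := by
    intro v hS hv hb
    rcases 𝒯.aux_Vt_cases hv with h | ⟨c, hc, hvc⟩
    · exact absurd h hb
    · have : 𝒯.IsSChild S t c := by
        refine ⟨hc, v, ?_, ?_⟩
        · by_cases h : v ∈ 𝒯.bag c
          · exact Or.inr ⟨h, hS⟩
          · exact Or.inl ⟨⟨hvc, h⟩, hS⟩
        · rintro (h | h)
          · exact h.1 hv
          · exact hb h.1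
      rcases hall c this with rfl | rfl
      · exact Or.inl hvc
      · exact Or.inr hvc
  have n1 : (𝒯.LS S t₁).Nonempty := by
    obtain ⟨v, h | h, hn⟩ := hs1
    · exact ⟨v, h⟩
    · exact absurd (Or.inr (hX (Or.inl h))) hn
  have n2 : (𝒯.LS S t₂).Nonempty := by
    obtain ⟨v, h | h, hn⟩ := hs2
    · exact ⟨v, h⟩
    · exact absurd (Or.inr (hX (Or.inr h))) hn
  clear hs1 hs2 hX hall hbot hnice
  refine ⟨?_, ?_, n1, n2, ?_, ?_⟩ <;> ext v <;>
    have m1 := m1 v <;> have m2 := m2 v <;> have b1 := b1 v <;> have b2 := b2 v <;>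
    have s1 := s1 v <;> have s2 := s2 v <;> have c0 := c0 v <;> have c1 := c1 v <;>
    have c2 := c2 v <;> have x1 := x1 v <;> have x2 := x2 v <;> have key := key v <;>
    simp only [RootedTreeDecomp.LS, RootedTreeDecomp.XS, RootedTreeDecomp.RS,
      RootedTreeDecomp.Lt, RootedTreeDecomp.Rt, Set.mem_union, Set.mem_inter_iff, Set.mem_diff,
      Set.mem_compl_iff, Set.mem_empty_iff_false] <;>
    grind
end

section
/- Let 𝒯 be an S-nice tree decomposition of a graph G=(V,E) for some S ⊆ V, and let t be an S-bottom node of 𝒯. If t has an S-child t', then either L_{t'}^S is a proper subset of L_t^S, or L_{t'}^S = L_t^S and X_{t'}^S is a proper subset of X_t^S. -/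
namespace RootedTreeDecomp

theorem aux_cycle {V ι : Type} {G : SimpleGraph V} (T : RootedTreeDecomp V ι G)
    (x : ι) (n : ℕ) (h : T.parent^[n+1] x = x) : x = T.root := by
  obtain ⟨k, hk⟩ := T.reaches_root x
  have hr : ∀ m, T.parent^[m] T.root = T.root := fun m =>
    Function.iterate_fixed T.parent_root m
  have h1 : T.parent^[(n+1)*k] x = x := by
    rw [Function.iterate_mul]
    exact Function.iterate_fixed h k
  have h2 : (n+1)*k = n*k + k := by ring
  rw [h2, Function.iterate_add_apply, hk, hr] at h1
  exact h1.symm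

theorem aux_not_sub {V ι : Type} {G : SimpleGraph V} (T : RootedTreeDecomp V ι G)
    (t t' : ι) (h : T.IsParent t t') : ¬ T.InSubtree t' t := by
  rintro ⟨n, hn⟩
  apply h.1
  apply T.aux_cycle t' n
  rw [Function.iterate_succ_apply, h.2, hn]

theorem aux_Vt {V ι : Type} {G : SimpleGraph V} (T : RootedTreeDecomp V ι G)
    (t t' : ι) (h : T.IsParent t t') : T.Vt t' ⊆ T.Vt t := by
  rintro v ⟨u, ⟨n, hn⟩, hv⟩
  exact ⟨u, ⟨n+1, by rw [Function.iterate_succ_apply', hn, h.2]⟩, hv⟩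

theorem aux_bag {V ι : Type} {G : SimpleGraph V} (T : RootedTreeDecomp V ι G)
    (t t' : ι) (h : T.IsParent t t') (v : V) (hv : v ∈ T.Vt t') (hvt : v ∈ T.bag t) :
    v ∈ T.bag t' := by
  obtain ⟨u, ⟨n, hn⟩, hu⟩ := hv
  obtain ⟨m, hm, hall⟩ := T.bags_connected v
  obtain ⟨k, hk, hk'⟩ := hall u hu
  obtain ⟨j, hj, -⟩ := hall t hvt
  by_cases hkn : n ≤ k
  · rw [← hn]; exact hk' n hkn
  · exfalso
    apply T.aux_not_sub t t' h
    refine ⟨(n - k) + j, ?_⟩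
    rw [Function.iterate_add_apply, hj, ← hk, ← Function.iterate_add_apply,
      Nat.sub_add_cancel (by omega), hn]

theorem aux_bag_Vt {V ι : Type} {G : SimpleGraph V} (T : RootedTreeDecomp V ι G)
    (t : ι) : T.bag t ⊆ T.Vt t := fun _ hv => ⟨t, ⟨0, rfl⟩, hv⟩

theorem aux_RS {V ι : Type} {G : SimpleGraph V} (T : RootedTreeDecomp V ι G)
    (S : Set V) (t : ι) : T.RS S t = S \ (T.LS S t ∪ T.XS S t) := by
  ext v
  have := @aux_bag_Vt V ι G T t v
  simp only [RS, Rt, LS, Lt, XS, Set.mem_inter_iff, Set.mem_compl_iff, Set.mem_sdiff,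
    Set.mem_union]
  tauto

end RootedTreeDecomp

/-- In an `S`-nice tree decomposition, if `t` is an `S`-bottom
node with an `S`-child `t'`, then `L_{t'}^S ⊂ L_t^S`, or `L_{t'}^S = L_t^S` and
`X_{t'}^S ⊂ X_t^S`. -/
theorem statement8 {V ι : Type} [Fintype V] [DecidableEq V] {G : SimpleGraph V}
    (𝒯 : RootedTreeDecomp V ι G) (S : Set V)
    (hnice : 𝒯.IsSNice S) (t t' : ι)
    (hbot : 𝒯.IsSBottom S t)
    (hchild : 𝒯.IsSChild S t t') :
    𝒯.LS S t' ⊂ 𝒯.LS S t ∨ (𝒯.LS S t' = 𝒯.LS S t ∧ 𝒯.XS S t' ⊂ 𝒯.XS S t) := by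
  have hp := hchild.1
  have hL : 𝒯.LS S t' ⊆ 𝒯.LS S t := by
    rintro v ⟨⟨h1, h2⟩, h3⟩
    exact ⟨⟨𝒯.aux_Vt t t' hp h1, fun h => h2 (𝒯.aux_bag t t' hp v h1 h)⟩, h3⟩
  rcases hL.ssubset_or_eq with hs | he
  · exact Or.inl hs
  refine Or.inr ⟨he, ?_⟩
  have hsub : 𝒯.XS S t' ⊆ 𝒯.XS S t := by
    rcases hnice.2 t hbot with ⟨v, t₁, h1, h2, h3, h4, h5⟩ | ⟨v, t₁, h1, h2, h3, h4, h5⟩ |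
      ⟨t₁, t₂, h0, h1, h2, h3, h4⟩
    · rw [h2 t' hchild, h5]; exact Set.subset_union_left
    · exfalso
      obtain rfl := h2 t' hchild
      have hv : v ∉ 𝒯.bag t := by
        intro hv
        have : v ∈ 𝒯.XS S t := ⟨hv, h3⟩
        rw [h5] at this
        exact this.2 rfl
      have : v ∈ 𝒯.LS S t := ⟨⟨𝒯.aux_Vt t t' hp (𝒯.aux_bag_Vt t' h4), hv⟩, h3⟩
      rw [← he] at this
      exact this.1.2 h4
    · rcases h3 t' hchild with rfl | rfl
      · exact Set.subset_union_left.trans h4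
      · exact Set.subset_union_right.trans h4
  rcases hsub.ssubset_or_eq with hs | hx
  · exact hs
  exfalso
  apply 𝒯.aux_not_sub t t' hp
  apply hbot.2
  simp only [RootedTreeDecomp.STrace, RootedTreeDecomp.aux_RS, he, hx]
end
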